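/- For every real ε ∈ (0, 1] and all integers s ≥ 0 and t ≥ 3 with s ≤ (ε/100)·t/ln t, for every graph H and every set S of s vertices of H such that H has t vertices outside S (i.e. |V(H)| = s + t), every graph G with average degree d(G) ≥ 4·⌈(1 + ε)·f(H − S)⌉ contains H as a minor; in particular f(H) ≤ 4·⌈(1 + ε)·f(H − S)⌉. -/

import Mathlib

open SimpleGraph

/-- `H` is a minor of `G`: there is a family of nonempty, connected,
pairwise disjoint branch sets in `G`, one for each vertex of `H`, with an
edge of `G` between the branch sets of any two adjacent vertices of `H`. -/
def HasMinor {V : Type*} {W : Type*} (G : SimpleGraph V) (H : SimpleGraph W) : Prop :=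
  ∃ φ : W → Set V,
    (∀ w, (φ w).Nonempty) ∧
    (∀ w, (G.induce (φ w)).Connected) ∧
    (Pairwise fun w w' => Disjoint (φ w) (φ w')) ∧
    (∀ ⦃w w'⦄, H.Adj w w' → ∃ u ∈ φ w, ∃ v ∈ φ w', G.Adj u v)

/-- The average degree `2|E(G)|/|V(G)|` of a graph. -/
noncomputable def avgDeg {V : Type*} (G : SimpleGraph V) : ℝ :=
  2 * Nat.card G.edgeSet / Nat.card V

/-- `f(H)`: the infimum of all `D` such that every (finite) graph with average
degree at least `D` contains `H` as a minor. -/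
noncomputable def minorF {W : Type*} (H : SimpleGraph W) : ℝ :=
  sInf {D : ℝ | ∀ (V : Type) [Fintype V], ∀ G : SimpleGraph V, D ≤ avgDeg G → HasMinor G H}

/-!
Write `f = minorF (H - S)` and `k = ⌈(1 + ε) f⌉`. Since a complete graph on `t - 1` vertices has no
minor on `t` vertices, `f ≥ t - 2 > 0`; hence `k ≥ t - 1`, and `k > f`, so that average degree `k`
forces an `(H - S)`-minor. (That `f` is an infimum over a nonempty set is Mader's theorem, proved in
`exists_forall_hasMinor_top`.)

Let `G` have average degree at least `4k`, that is, at least `2k` edges per vertex. A minor-minimal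
minor of `G` with this density has a vertex of degree at most `4k` whose neighbourhood induces
minimum degree at least `2k`, because contracting an edge must destroy more than `2k` edges
(`exists_dense_neighborhood`). Inside this neighbourhood, a smallest set `B` inducing minimum degree
at least `k + |B| / 4` remains connected after any deletion of at most `|B| / 8` vertices
(`exists_robust`). Every vertex of `B` keeps at least `3/8` of `B` as neighbours after such a
deletion, so a greedy choice finds a dominating set of logarithmic size, and a dominating set in a
connected graph is made connected by tripling its size (`exists_connected_dominating`).

The hypothesis on `s` lets this be repeated `s` times with at most `k / 8 ≤ |B| / 8` vertices used
in total (`exists_steps`, `exists_family`); only `k ≥ t - 1` matters here, not an upper bound on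
`k`. The rest of `B` still has minimum degree at least `k`, so it has an `(H - S)`-minor, and the `s`
disjoint connected dominating sets are branch sets for the vertices of `S`: they have neighbours in
every branch set inside `B` (`hasMinor_of_family`).
-/

open Finset

/-! ### Minor models -/

lemma HasMinor.of_le {V : Type*} {G G' : SimpleGraph V} (h : G' ≤ G) : HasMinor G G' := by
  refine ⟨fun v => {v}, fun v => ⟨v, rfl⟩, fun v => ?_, fun v w hvw => by simpa using hvw, ?_⟩
  · have : Subsingleton (({v} : Set V)) := inferInstance
    exact SimpleGraph.Connected.of_subsingleton
  · intro v w hvw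
    exact ⟨v, rfl, w, rfl, h hvw⟩

/-- If the sets `φ w`, for `w` in a connected vertex set `A` of `K`, are connected in `G` and
adjacent vertices of `K` are carried to sets joined by an edge of `G`, then the union of these
sets is connected. -/
lemma connected_biUnion {V W : Type*} {G : SimpleGraph V} {K : SimpleGraph W} {φ : W → Set V}
    (hne : ∀ w, (φ w).Nonempty) (hc : ∀ w, (G.induce (φ w)).Connected)
    (ha : ∀ ⦃w w'⦄, K.Adj w w' → ∃ u ∈ φ w, ∃ v ∈ φ w', G.Adj u v)
    {A : Set W} (hA : (K.induce A).Connected) : (G.induce (⋃ w ∈ A, φ w)).Connected := by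
  obtain ⟨⟨a, haA⟩⟩ := hA.nonempty
  obtain ⟨x, hx⟩ := hne a
  have hsub : ∀ b ∈ A, φ b ⊆ ⋃ w ∈ A, φ w := fun b hb => Set.subset_biUnion_of_mem hb
  have inner : ∀ b (hb : b ∈ A) (y z : V) (hy : y ∈ φ b) (hz : z ∈ φ b),
      (G.induce (⋃ w ∈ A, φ w)).Reachable ⟨y, hsub b hb hy⟩ ⟨z, hsub b hb hz⟩ := by
    intro b hb y z hy hz
    exact ((hc b).preconnected ⟨y, hy⟩ ⟨z, hz⟩).map (induceHomOfLE _ (hsub b hb)).toHom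
  have key : ∀ b : A, (K.induce A).Reachable ⟨a, haA⟩ b → ∀ y (hy : y ∈ φ b),
      (G.induce (⋃ w ∈ A, φ w)).Reachable ⟨x, hsub a haA hx⟩ ⟨y, hsub b b.2 hy⟩ := by
    intro b hb
    rw [reachable_iff_reflTransGen] at hb
    induction hb with
    | refl => exact fun y hy => inner a haA x y hx hy
    | @tail b c _ hbc ih =>
      intro y hy
      obtain ⟨p, hp, q, hq, hpq⟩ := ha hbc
      have h1 := ih p hp
      have h2 : (G.induce (⋃ w ∈ A, φ w)).Adj ⟨p, hsub b b.2 hp⟩ ⟨q, hsub c c.2 hq⟩ := hpq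
      exact (h1.trans h2.reachable).trans (inner c c.2 q y hq hy)
  rw [connected_iff_exists_forall_reachable]
  refine ⟨⟨x, hsub a haA hx⟩, ?_⟩
  rintro ⟨y, hy⟩
  obtain ⟨b, hb, hyb⟩ := Set.mem_iUnion₂.1 hy
  exact key ⟨b, hb⟩ (hA.preconnected _ _) y hyb

lemma HasMinor.trans {V W U : Type*} {G : SimpleGraph V} {K : SimpleGraph W} {H : SimpleGraph U}
    (h₁ : HasMinor G K) (h₂ : HasMinor K H) : HasMinor G H := by
  obtain ⟨φ, hne, hc, hd, ha⟩ := h₁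
  obtain ⟨ψ, hne', hc', hd', ha'⟩ := h₂
  refine ⟨fun u => ⋃ w ∈ ψ u, φ w, fun u => ?_, fun u => ?_, fun u u' huu' => ?_, ?_⟩
  · obtain ⟨w, hw⟩ := hne' u
    obtain ⟨x, hx⟩ := hne w
    exact ⟨x, Set.mem_biUnion hw hx⟩
  · exact connected_biUnion hne hc ha (hc' u)
  · simp only [Set.disjoint_iUnion_left, Set.disjoint_iUnion_right]
    intro w hw w' hw'
    refine hd ?_
    rintro rfl
    exact Set.disjoint_left.1 (hd' huu') hw' hw
  · intro u u' huu'
    obtain ⟨w, hw, w', hw', hww'⟩ := ha' huu'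
    obtain ⟨x, hx, y, hy, hxy⟩ := ha hww'
    exact ⟨x, Set.mem_biUnion hw hx, y, Set.mem_biUnion hw' hy, hxy⟩

/-- A minor model in an induced subgraph is a minor model in the whole graph whose branch sets
avoid the deleted vertices. -/
lemma HasMinor.exists_of_induce {V U : Type*} {G : SimpleGraph V} {H : SimpleGraph U} {A : Set V}
    (h : HasMinor (G.induce A) H) :
    ∃ φ : U → Set V, (∀ w, φ w ⊆ A) ∧
    (∀ w, (φ w).Nonempty) ∧
    (∀ w, (G.induce (φ w)).Connected) ∧
    (Pairwise fun w w' => Disjoint (φ w) (φ w')) ∧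
    (∀ ⦃w w'⦄, H.Adj w w' → ∃ u ∈ φ w, ∃ v ∈ φ w', G.Adj u v) := by
  obtain ⟨φ, hne, hc, hd, ha⟩ := h
  refine ⟨fun w => Subtype.val '' φ w, fun w => ?_, fun w => (hne w).image _, fun w => ?_,
    fun w w' hww' => ?_, ?_⟩
  · rintro _ ⟨x, _, rfl⟩
    exact x.2
  · let f : (G.induce A).induce (φ w) →g G.induce (Subtype.val '' φ w) :=
      { toFun := fun x => ⟨x.1.1, x.1, x.2, rfl⟩
        map_rel' := fun {a b} hab => hab }
    refine Connected.map f ?_ (hc w)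
    rintro ⟨_, x, hx, rfl⟩
    exact ⟨⟨x, hx⟩, rfl⟩
  · exact (Set.disjoint_image_iff Subtype.val_injective).2 (hd hww')
  · intro w w' hww'
    obtain ⟨x, hx, y, hy, hxy⟩ := ha hww'
    exact ⟨x, ⟨x, hx, rfl⟩, y, ⟨y, hy, rfl⟩, hxy⟩

lemma HasMinor.of_induce {V U : Type*} {G : SimpleGraph V} {H : SimpleGraph U} {A : Set V}
    (h : HasMinor (G.induce A) H) : HasMinor G H := by
  obtain ⟨φ, _, h⟩ := h.exists_of_induce
  exact ⟨φ, h⟩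

lemma HasMinor.induce_self {V : Type*} (G : SimpleGraph V) (A : Set V) :
    HasMinor G (G.induce A) :=
  (HasMinor.of_le le_rfl).of_induce

/-! ### Contraction and dense neighbourhoods -/

/-- The contraction of the edge `uv`: the vertex `u` is removed and `v` inherits its neighbours. -/
def contractTo {V : Type*} (G : SimpleGraph V) (u v : V) : SimpleGraph (({u}ᶜ : Set V)) where
  Adj a b := a ≠ b ∧ (G.Adj a b ∨ (a.1 = v ∧ G.Adj u b) ∨ (b.1 = v ∧ G.Adj u a))
  symm := ⟨fun a b h => ⟨h.1.symm, by
    rcases h.2 with h | h | h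
    · exact Or.inl h.symm
    · exact Or.inr (Or.inr h)
    · exact Or.inr (Or.inl h)⟩⟩
  loopless := ⟨fun a h => h.1 rfl⟩

lemma hasMinor_contractTo {V : Type*} {G : SimpleGraph V} {u v : V} (huv : G.Adj u v) :
    HasMinor G (contractTo G u v) := by
  classical
  refine ⟨fun a => if a.1 = v then {u, v} else {a.1}, fun a => ?_, fun a => ?_,
    fun a b hab => ?_, ?_⟩
  · dsimp only
    split_ifs <;> simp
  · by_cases h : a.1 = v
    · beta_reduce
      rw [if_pos h]
      exact induce_pair_connected_of_adj huv
    · beta_reduce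
      rw [if_neg h]
      have : Subsingleton (({a.1} : Set V)) := inferInstance
      exact SimpleGraph.Connected.of_subsingleton
  · have hab' : a.1 ≠ b.1 := fun h => hab (Subtype.ext h)
    have hau : a.1 ≠ u := a.2
    have hbu : b.1 ≠ u := b.2
    dsimp only
    rw [Set.disjoint_left]
    intro x hx hx'
    split_ifs at hx hx' <;> simp only [Set.mem_insert_iff, Set.mem_singleton_iff] at hx hx' <;>
      grind
  · rintro a b ⟨hab, h⟩
    have mem : ∀ c : (({u}ᶜ : Set V)), c.1 ∈ (if c.1 = v then {u, v} else {c.1} : Set V) := by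
      intro c
      split_ifs with h
      · simp [h]
      · simp
    rcases h with h | ⟨rfl, h⟩ | ⟨rfl, h⟩
    · exact ⟨a, mem a, b, mem b, h⟩
    · exact ⟨u, by simp, b, mem b, h⟩
    · exact ⟨a, mem a, u, by simp, h.symm⟩

lemma card_edgeFinset_eq {V : Type*} (G : SimpleGraph V) [Fintype G.edgeSet] :
    #G.edgeFinset = Nat.card G.edgeSet := by
  rw [edgeFinset_card, Nat.card_eq_fintype_card]

open Classical in
/-- Deleting a vertex destroys as many edges as its degree. -/
lemma card_edgeSet_induce_compl {V : Type*} [Fintype V] (G : SimpleGraph V) (u : V) :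
    Nat.card (G.induce {u}ᶜ).edgeSet = Nat.card G.edgeSet - #{x | G.Adj u x} := by
  have h := card_edgeFinset_induce_compl_singleton G u
  rw [card_edgeFinset_deleteIncidenceSet, card_edgeFinset_eq, card_edgeFinset_eq,
    ← card_neighborFinset_eq_degree, neighborFinset_eq_filter] at h
  exact h

open Classical in
/-- Contracting `uv` destroys the edge `uv` and one edge for each common neighbour. -/
lemma card_edgeSet_contractTo {V : Type*} [Fintype V] {G : SimpleGraph V} {u v : V}
    (huv : G.Adj u v) :
    Nat.card G.edgeSet ≤
      Nat.card (contractTo G u v).edgeSet + 1 + #{w : V | G.Adj u w ∧ G.Adj v w} := by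
  have h1 := card_edgeSet_induce_compl G u
  have hv : v ∈ ({u}ᶜ : Set V) := by simpa using huv.ne'
  -- the edges that `v` newly acquires
  set T : Finset (({u}ᶜ : Set V)) := {w | G.Adj u w ∧ ¬ G.Adj v w ∧ w.1 ≠ v} with hT
  have hTinj : Set.InjOn (fun w : (({u}ᶜ : Set V)) => s(⟨v, hv⟩, w)) T := by
    intro a _ b _ hab
    exact Sym2.congr_right.1 hab
  have h2 : Nat.card (G.induce {u}ᶜ).edgeSet + #T ≤ Nat.card (contractTo G u v).edgeSet := by
    rw [← card_edgeFinset_eq, ← card_edgeFinset_eq, ← card_image_of_injOn hTinj, ← card_union_of_disjoint]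
    · apply card_le_card
      intro e he
      rw [mem_union] at he
      rcases he with he | he
      · rw [mem_edgeFinset] at he ⊢
        induction e using Sym2.ind with
        | _ a b =>
          rw [mem_edgeSet] at he ⊢
          exact ⟨he.ne, Or.inl he⟩
      · obtain ⟨w, hw, rfl⟩ := mem_image.1 he
        rw [mem_edgeFinset]
        have hw' := (mem_filter.1 hw).2
        exact ⟨fun h => hw'.2.2 (congrArg Subtype.val h).symm, Or.inr (Or.inl ⟨rfl, hw'.1⟩)⟩
    · rw [Finset.disjoint_left]
      intro e he he'
      obtain ⟨w, hw, rfl⟩ := mem_image.1 he'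
      rw [mem_edgeFinset] at he
      exact (mem_filter.1 hw).2.2.1 he
  have h3 : #{x | G.Adj u x} ≤ #T + 1 + #{w : V | G.Adj u w ∧ G.Adj v w} := by
    rw [← card_map (Function.Embedding.subtype _) (s := T),
      ← card_singleton v]
    refine le_trans (card_le_card ?_) ((card_union_le _ _).trans
      (Nat.add_le_add_right (card_union_le _ _) _))
    intro w hw
    replace hw : G.Adj u w := (mem_filter.1 hw).2
    simp only [mem_union, mem_map, mem_singleton, mem_filter, mem_univ, true_and, hT]
    by_cases h : w = v
    · exact Or.inl (Or.inr h)
    by_cases h' : G.Adj v w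
    · exact Or.inr ⟨hw, h'⟩
    · exact Or.inl (Or.inl ⟨⟨w, hw.ne'⟩, ⟨hw, h', h⟩, rfl⟩)
  omega

open Classical in
/-- A graph with at least `β` edges per vertex has a minor with a vertex `v` of positive degree at
most `2β` all of whose neighbours have at least `β` common neighbours with `v`. In a
minor-minimal graph of this density there are exactly `β` edges per vertex, which bounds the
minimum degree, there are no isolated vertices, and contracting an edge must destroy more than `β`
edges. -/
lemma exists_dense_neighborhood {β : ℕ} (hβ : 1 ≤ β) (n : ℕ) :
    ∀ (V : Type) [Fintype V] (G : SimpleGraph V), Fintype.card V = n → 0 < n →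
      β * n ≤ Nat.card G.edgeSet →
      ∃ (W : Type) (_ : Fintype W) (K : SimpleGraph W) (v : W), HasMinor G K ∧
        #{x | K.Adj v x} ≤ 2 * β ∧ (∃ x, K.Adj v x) ∧
        ∀ x, K.Adj v x → β ≤ #{w | K.Adj v w ∧ K.Adj x w} := by
  induction n using Nat.strong_induction_on with
  | _ n ih =>
  intro V _ G₀ hn hpos he₀
  rw [← card_edgeFinset_eq] at he₀
  obtain ⟨E, hE, hEc⟩ := exists_subset_card_eq he₀
  have hG : ∃ G ≤ G₀, Nat.card G.edgeSet = β * n := by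
    have hGe : (fromEdgeSet (E : Set (Sym2 V))).edgeFinset = E := by
      ext e
      rw [mem_edgeFinset, edgeSet_fromEdgeSet]
      refine ⟨fun h => by simpa using h.1, fun h => ⟨by simpa using h, ?_⟩⟩
      have := hE h
      rw [mem_edgeFinset] at this
      exact G₀.not_isDiag_of_mem_edgeSet this
    refine ⟨fromEdgeSet (E : Set (Sym2 V)), ?_, by rw [← card_edgeFinset_eq, hGe, hEc]⟩
    rw [← edgeFinset_subset_edgeFinset, hGe]
    exact hE
  obtain ⟨G, hle, he⟩ := hG
  have hG0 : HasMinor G₀ G := HasMinor.of_le hle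
  have hcard : ∀ u : V, Fintype.card (({u}ᶜ : Set V)) = n - 1 := by
    intro u
    rw [Fintype.card_compl_set]
    simp [hn]
  have hmul : β * (n - 1) + β = β * n := by
    obtain ⟨m, rfl⟩ : ∃ m, n = m + 1 := ⟨n - 1, by omega⟩
    simp [Nat.mul_add]
  by_cases hiso : ∃ u, #{x | G.Adj u x} = 0
  · obtain ⟨u, hu⟩ := hiso
    have h1 : Nat.card (G.induce {u}ᶜ).edgeSet = β * n := by
      rw [card_edgeSet_induce_compl, hu, he, Nat.sub_zero]
    have hn1 : n ≠ 1 := by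
      rintro rfl
      have : IsEmpty (({u}ᶜ : Set V)) := by
        rw [← Fintype.card_eq_zero_iff, hcard]
      have h0 : Nat.card (G.induce {u}ᶜ).edgeSet = 0 := by
        rw [Nat.card_eq_zero]
        exact Or.inl ⟨fun e => e.1.ind fun a b => this.false a⟩
      omega
    obtain ⟨W, i, K, v, hK, h⟩ := ih (n - 1) (by omega) (({u}ᶜ : Set V)) (G.induce {u}ᶜ)
      (hcard u) (by omega) (by rw [h1]; omega)
    exact ⟨W, i, K, v, (hG0.trans (HasMinor.induce_self G _)).trans hK, h⟩
  by_cases hedge : ∃ u v, G.Adj u v ∧ #{w : V | G.Adj u w ∧ G.Adj v w} < β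
  · obtain ⟨u, v, huv, hlt⟩ := hedge
    have h1 := card_edgeSet_contractTo huv
    have hn1 : 1 < n := by
      rw [← hn]
      exact Fintype.one_lt_card_iff.2 ⟨u, v, huv.ne⟩
    obtain ⟨W, i, K, x, hK, h⟩ := ih (n - 1) (by omega) (({u}ᶜ : Set V)) (contractTo G u v)
      (hcard u) (by omega) (by omega)
    exact ⟨W, i, K, x, (hG0.trans (hasMinor_contractTo huv)).trans hK, h⟩
  push Not at hiso hedge
  have hne : (univ : Finset V).Nonempty := by
    rw [univ_nonempty_iff, ← Fintype.card_pos_iff, hn]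
    exact hpos
  obtain ⟨v, -, hv⟩ : ∃ v ∈ (univ : Finset V), #{x | G.Adj v x} ≤ 2 * β := by
    apply exists_le_of_sum_le hne
    have hsum : ∑ v, #{x | G.Adj v x} = 2 * (β * n) := by
      rw [← he, ← card_edgeFinset_eq, ← sum_degrees_eq_twice_card_edges]
      refine sum_congr rfl fun v _ => ?_
      rw [← card_neighborFinset_eq_degree, neighborFinset_eq_filter]
    rw [hsum, sum_const, card_univ, hn, smul_eq_mul]
    exact le_of_eq (by ring)
  refine ⟨V, inferInstance, G, v, hG0, hv, ?_, fun x hx => hedge v x hx⟩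
  obtain ⟨x, hx⟩ := card_pos.1 (Nat.pos_of_ne_zero (hiso v))
  exact ⟨x, (mem_filter.1 hx).2⟩

open Classical in
lemma le_avgDeg_induce {W : Type*} [Fintype W] (G : SimpleGraph W) {A : Finset W} {k : ℕ}
    (hA : A.Nonempty) (hdeg : ∀ x ∈ A, k ≤ #{w ∈ A | G.Adj x w}) :
    (k : ℝ) ≤ avgDeg (G.induce (A : Set W)) := by
  have hsum : k * #A ≤ 2 * Nat.card (G.induce (A : Set W)).edgeSet := by
    rw [← card_edgeFinset_eq, ← sum_degrees_eq_twice_card_edges]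
    have hA' : Fintype.card (A : Set W) = #A := by simp
    rw [← hA', ← card_univ, mul_comm, ← smul_eq_mul, ← sum_const]
    refine sum_le_sum fun x _ => ?_
    refine (hdeg x x.2).trans ?_
    rw [← card_neighborFinset_eq_degree, ← card_map (Function.Embedding.subtype _)]
    refine card_le_card fun w hw => ?_
    rw [mem_filter] at hw
    rw [mem_map]
    refine ⟨⟨w, hw.1⟩, ?_, rfl⟩
    rw [mem_neighborFinset]
    exact hw.2
  have hpos : (0 : ℝ) < #A := by exact_mod_cast hA.card_pos
  have hc : (Nat.card (A : Set W) : ℝ) = #A := by simp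
  rw [avgDeg, hc, le_div_iff₀ hpos]
  exact_mod_cast hsum

lemma le_card_edgeSet_of_avgDeg {V : Type*} [Fintype V] {G : SimpleGraph V} {β : ℕ} (hβ : 1 ≤ β)
    (h : (2 * β : ℝ) ≤ avgDeg G) :
    0 < Fintype.card V ∧ β * Fintype.card V ≤ Nat.card G.edgeSet := by
  have hβ' : (1 : ℝ) ≤ β := by exact_mod_cast hβ
  have hpos : 0 < Fintype.card V := by
    by_contra h0
    have : Nat.card V = 0 := by rw [Nat.card_eq_fintype_card]; omega
    rw [avgDeg, this] at h
    simp only [Nat.cast_zero, div_zero] at h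
    linarith
  refine ⟨hpos, ?_⟩
  have hpos' : (0 : ℝ) < Fintype.card V := by exact_mod_cast hpos
  rw [avgDeg, Nat.card_eq_fintype_card (α := V), le_div_iff₀ hpos'] at h
  have : (β : ℝ) * Fintype.card V ≤ Nat.card G.edgeSet := by linarith
  exact_mod_cast this

/-! ### The function `minorF` -/

/-- Large average degree forces a complete minor, by induction on its order: the dense
neighbourhood of a vertex `v` has a smaller complete minor, and `{v}` is an additional branch
set. -/
lemma exists_forall_hasMinor_top (t : ℕ) : ∃ β : ℕ, 1 ≤ β ∧
    ∀ (V : Type) [Fintype V] (G : SimpleGraph V), (β : ℝ) ≤ avgDeg G →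
      HasMinor G (⊤ : SimpleGraph (Fin t)) := by
  classical
  induction t with
  | zero =>
    exact ⟨1, le_rfl, fun V _ G _ => ⟨fun i => i.elim0, fun i => i.elim0, fun i => i.elim0,
      fun i => i.elim0, fun i => i.elim0⟩⟩
  | succ t ih =>
    obtain ⟨β, hβ, ih⟩ := ih
    refine ⟨2 * β, by omega, fun V _ G hG => ?_⟩
    obtain ⟨hpos, he⟩ := le_card_edgeSet_of_avgDeg hβ (by exact_mod_cast hG)
    obtain ⟨W, _, K, v, hK, -, ⟨x, hx⟩, hdeg⟩ := exists_dense_neighborhood hβ _ V G rfl hpos he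
    set A : Finset W := {x | K.Adj v x} with hA
    have hmem : ∀ x, x ∈ A ↔ K.Adj v x := fun x => by simp [hA]
    have h1 : (β : ℝ) ≤ avgDeg (K.induce (A : Set W)) := by
      refine le_avgDeg_induce K ⟨x, (hmem x).2 hx⟩ fun y hy => ?_
      rw [hA, filter_filter]
      exact hdeg y ((hmem y).1 hy)
    obtain ⟨φ, hsub, hne, hc, hd, ha⟩ := (ih _ _ h1).exists_of_induce
    refine hK.trans ⟨fun i => Fin.cases {v} φ i, fun i => ?_, fun i => ?_, fun i j hij => ?_, ?_⟩
    · refine Fin.cases ?_ (fun i => ?_) i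
      · exact ⟨v, rfl⟩
      · exact hne i
    · refine Fin.cases ?_ (fun i => ?_) i
      · have : Subsingleton (({v} : Set W)) := inferInstance
        exact SimpleGraph.Connected.of_subsingleton (G := K.induce ({v} : Set W))
      · exact hc i
    · have hv : ∀ i, Disjoint {v} (φ i) := by
        intro i
        rw [Set.disjoint_singleton_left]
        intro hvi
        exact K.irrefl ((hmem v).1 (hsub i hvi))
      revert hij
      refine Fin.cases ?_ (fun i => ?_) i <;> refine Fin.cases ?_ (fun j => ?_) j
      · exact fun h => absurd rfl h
      · exact fun _ => hv j
      · exact fun _ => (hv i).symm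
      · exact fun h => hd fun h' => h (congrArg _ h')
    · have hv : ∀ i, ∃ y ∈ φ i, K.Adj v y := by
        intro i
        obtain ⟨y, hy⟩ := hne i
        exact ⟨y, hy, (hmem y).1 (hsub i hy)⟩
      intro i j
      refine Fin.cases ?_ (fun i => ?_) i <;> refine Fin.cases ?_ (fun j => ?_) j
      · exact fun h => absurd rfl h.ne
      · intro _
        obtain ⟨y, hy, hvy⟩ := hv j
        exact ⟨v, rfl, y, hy, hvy⟩
      · intro _
        obtain ⟨y, hy, hvy⟩ := hv i
        exact ⟨y, hy, v, rfl, hvy.symm⟩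
      · intro h
        exact ha fun h' => h.ne (congrArg _ h')

lemma HasMinor.of_top {V W : Type*} [Fintype W] {G : SimpleGraph V}
    (h : HasMinor G (⊤ : SimpleGraph (Fin (Fintype.card W)))) (H : SimpleGraph W) :
    HasMinor G H := by
  obtain ⟨φ, hne, hc, hd, ha⟩ := h
  let e := Fintype.equivFin W
  exact ⟨fun w => φ (e w), fun w => hne _, fun w => hc _,
    fun w w' h => hd fun h' => h (e.injective h'),
    fun w w' h => ha fun h' => h.ne (e.injective h')⟩

lemma minorF_set_nonempty {W : Type*} [Fintype W] (H : SimpleGraph W) :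
    {D : ℝ | ∀ (V : Type) [Fintype V], ∀ G : SimpleGraph V,
      D ≤ avgDeg G → HasMinor G H}.Nonempty := by
  obtain ⟨β, -, h⟩ := exists_forall_hasMinor_top (Fintype.card W)
  exact ⟨β, fun V _ G hG => (h V G hG).of_top H⟩

/-- A complete graph with fewer vertices than `H` has no `H`-minor, so the degree of such a graph
is a lower bound for every admissible `D`. -/
lemma lt_of_forall_hasMinor {W : Type*} [Fintype W] {H : SimpleGraph W} {t : ℕ}
    (ht : 2 ≤ t) (hW : Fintype.card W = t) {D : ℝ}
    (hD : ∀ (V : Type) [Fintype V], ∀ G : SimpleGraph V, D ≤ avgDeg G → HasMinor G H) :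
    (t : ℝ) - 2 < D := by
  classical
  by_contra hlt
  push Not at hlt
  have havg : (t : ℝ) - 2 ≤ avgDeg (⊤ : SimpleGraph (Fin (t - 1))) := by
    have h2 : 2 * Nat.card (⊤ : SimpleGraph (Fin (t - 1))).edgeSet = (t - 1) * (t - 2) := by
      rw [← card_edgeFinset_eq, ← sum_degrees_eq_twice_card_edges]
      simp [Nat.sub_sub]
    have h3 : (0 : ℝ) < ((t - 1 : ℕ) : ℝ) := by
      have : 0 < t - 1 := by omega
      exact_mod_cast this
    rw [avgDeg, Nat.card_eq_fintype_card (α := Fin (t - 1)), Fintype.card_fin, le_div_iff₀ h3]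
    have h4 : (t : ℝ) - 2 = ((t - 2 : ℕ) : ℝ) := by
      rw [Nat.cast_sub ht]
      norm_num
    rw [h4]
    have : (t - 2) * (t - 1) ≤ 2 * Nat.card (⊤ : SimpleGraph (Fin (t - 1))).edgeSet := by
      rw [h2, mul_comm]
    exact_mod_cast this
  obtain ⟨φ, hne, -, hd, -⟩ := hD _ _ (hlt.trans havg)
  choose f hf using hne
  have hinj : Function.Injective f := by
    intro a b hab
    by_contra hne
    exact Set.disjoint_left.1 (hd hne) (hf a) (hab ▸ hf b)
  have := Fintype.card_le_of_injective f hinj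
  rw [Fintype.card_fin, hW] at this
  omega

/-! ### Robustly connected subsets and connected dominating sets -/

open Classical in
/-- A set `B` of minimum size among those inducing minimum degree at least `k + |B| / 4` stays
connected after the deletion of any at most `|B| / 8` vertices: otherwise the smaller side `P` of
a separation has `|P| ≤ |B| / 2` and minimum degree at least
`k + |B| / 4 - |B| / 8 ≥ k + |P| / 4`. -/
lemma exists_robust {W : Type*} {G : SimpleGraph W} {k : ℕ} {A : Finset W}
    (hA : A.Nonempty) (hAk : #A ≤ 4 * k) (hdeg : ∀ x ∈ A, 2 * k ≤ #{w ∈ A | G.Adj x w}) :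
    ∃ B ⊆ A, B.Nonempty ∧ (∀ x ∈ B, 4 * k + #B ≤ 4 * #{w ∈ B | G.Adj x w}) ∧
      ∀ X : Finset W, 8 * #X ≤ #B → ∀ P ⊆ B \ X, P.Nonempty → P ≠ B \ X →
        ∃ p ∈ P, ∃ q ∈ (B \ X) \ P, G.Adj p q := by
  let good : Finset W → Prop := fun B =>
    B.Nonempty ∧ ∀ x ∈ B, 4 * k + #B ≤ 4 * #{w ∈ B | G.Adj x w}
  have hAgood : A ∈ A.powerset.filter good := by
    refine mem_filter.2 ⟨mem_powerset_self A, hA, fun x hx => ?_⟩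
    have := hdeg x hx
    omega
  obtain ⟨B, hB, hmin⟩ := exists_min_image _ card ⟨A, hAgood⟩
  rw [mem_filter, mem_powerset] at hB
  obtain ⟨hBA, hBne, hBdeg⟩ := hB
  refine ⟨B, hBA, hBne, hBdeg, fun X hX => ?_⟩
  -- the smaller side of a separation would contradict minimality
  have small : ∀ P ⊆ B \ X, P.Nonempty → 2 * #P ≤ #B →
      (∀ p ∈ P, ∀ q ∈ (B \ X) \ P, ¬ G.Adj p q) → False := by
    intro P hP hPne hPB hsep
    have hPgood : P ∈ A.powerset.filter good := by
      refine mem_filter.2 ⟨mem_powerset.2 ((hP.trans sdiff_subset).trans hBA), hPne,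
        fun x hx => ?_⟩
      have h1 := hBdeg x (mem_sdiff.1 (hP hx)).1
      have h2 : #{w ∈ B | G.Adj x w} ≤ #{w ∈ P | G.Adj x w} + #X := by
        refine (card_le_card fun w hw => ?_).trans (card_union_le _ _)
        rw [mem_filter] at hw
        rw [mem_union, mem_filter]
        by_contra hcon
        push Not at hcon
        refine hsep x hx w ?_ hw.2
        simp only [mem_sdiff]
        exact ⟨⟨hw.1, hcon.2⟩, fun h => hcon.1 h hw.2⟩
      omega
    have h1 := hmin P hPgood
    have h2 := hBne.card_pos
    omega
  intro P hP hPne hPX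
  by_contra hsep
  push Not at hsep
  by_cases hsize : 2 * #P ≤ #B
  · exact small P hP hPne hsize hsep
  · refine small ((B \ X) \ P) sdiff_subset ?_ ?_ ?_
    · rw [sdiff_nonempty]
      exact fun h => hPX (hP.antisymm h)
    · have h1 := card_sdiff_add_card_eq_card hP
      have h2 : #(B \ X) ≤ #B := card_le_card sdiff_subset
      omega
    · intro p hp q hq hpq
      have hqP : q ∈ P := by
        by_contra h
        simp only [mem_sdiff] at hq
        exact hq.2 ⟨hq.1, h⟩
      exact hsep q hqP p hp hpq.symm

open Classical in
/-- Greedy choice of a dominating set: since every vertex of `B` is adjacent to at least `3/8` of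
`B` inside `B \ X`, some vertex of `B \ X` dominates at least `3/8` of the vertices not yet
dominated. -/
lemma exists_almost_dominating {W : Type*} {G : SimpleGraph W} {k : ℕ} {B X : Finset W}
    (hB : B.Nonempty) (hBk : #B ≤ 4 * k)
    (hdeg : ∀ x ∈ B, 4 * k + #B ≤ 4 * #{w ∈ B | G.Adj x w}) (hX : 8 * #X ≤ #B) (j : ℕ) :
    ∃ D ⊆ B \ X, #D ≤ j ∧ 8 ^ j * #{x ∈ B | ∀ y ∈ D, ¬ G.Adj x y} ≤ 5 ^ j * #B := by
  have hdeg' : ∀ x ∈ B, 3 * #B ≤ 8 * #{y ∈ B \ X | G.Adj x y} := by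
    intro x hx
    have h1 := hdeg x hx
    have h2 : #{w ∈ B | G.Adj x w} ≤ #{y ∈ B \ X | G.Adj x y} + #X := by
      refine (card_le_card fun w hw => ?_).trans (card_union_le _ _)
      rw [mem_filter] at hw
      rw [mem_union, mem_filter, mem_sdiff]
      tauto
    omega
  have hBX : (B \ X).Nonempty := by
    rw [sdiff_nonempty]
    intro h
    have h1 := card_le_card h
    have h2 := hB.card_pos
    omega
  induction j with
  | zero =>
    refine ⟨∅, empty_subset _, by simp, ?_⟩
    simp
  | succ j ih =>
    obtain ⟨D, hD, hDj, hY⟩ := ih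
    set Y : Finset W := {x ∈ B | ∀ y ∈ D, ¬ G.Adj x y} with hYdef
    have hcount : ∑ y ∈ B \ X, #{x ∈ Y | G.Adj x y} = ∑ x ∈ Y, #{y ∈ B \ X | G.Adj x y} :=
      (sum_card_bipartiteAbove_eq_sum_card_bipartiteBelow (s := Y) (t := B \ X) G.Adj).symm
    obtain ⟨y, hy, hyY⟩ : ∃ y ∈ B \ X, 3 * #Y ≤ 8 * #{x ∈ Y | G.Adj x y} := by
      apply exists_le_of_sum_le hBX
      rw [sum_const, smul_eq_mul, ← mul_sum, hcount]
      calc #(B \ X) * (3 * #Y) ≤ #B * (3 * #Y) :=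
            Nat.mul_le_mul_right _ (card_le_card sdiff_subset)
        _ = ∑ x ∈ Y, 3 * #B := by rw [sum_const, smul_eq_mul]; ring
        _ ≤ ∑ x ∈ Y, 8 * #{y ∈ B \ X | G.Adj x y} :=
            sum_le_sum fun x hx => hdeg' x (mem_filter.1 hx).1
        _ = _ := by rw [mul_sum]
    refine ⟨insert y D, insert_subset hy hD, (card_insert_le _ _).trans (by omega), ?_⟩
    have hsplit := card_filter_add_card_filter_not (s := Y) (fun x => G.Adj x y)
    have hnew : #{x ∈ B | ∀ z ∈ insert y D, ¬ G.Adj x z} ≤ #{x ∈ Y | ¬ G.Adj x y} := by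
      refine card_le_card fun x hx => ?_
      rw [mem_filter] at hx
      rw [mem_filter, hYdef, mem_filter]
      exact ⟨⟨hx.1, fun z hz => hx.2 z (mem_insert_of_mem hz)⟩, hx.2 y (mem_insert_self _ _)⟩
    have h8 : 8 * #{x ∈ B | ∀ z ∈ insert y D, ¬ G.Adj x z} ≤ 5 * #Y := by omega
    calc 8 ^ (j + 1) * #{x ∈ B | ∀ z ∈ insert y D, ¬ G.Adj x z}
        = 8 ^ j * (8 * #{x ∈ B | ∀ z ∈ insert y D, ¬ G.Adj x z}) := by ring
      _ ≤ 8 ^ j * (5 * #Y) := Nat.mul_le_mul_left _ h8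
      _ = 5 * (8 ^ j * #Y) := by ring
      _ ≤ 5 * (5 ^ j * #B) := Nat.mul_le_mul_left _ hY
      _ = 5 ^ (j + 1) * #B := by ring

lemma connected_insert {W : Type*} [DecidableEq W] {G : SimpleGraph W} {C : Finset W} {c w : W}
    (hC : (G.induce (C : Set W)).Connected) (hc : c ∈ C) (h : G.Adj w c) :
    (G.induce ((insert w C : Finset W) : Set W)).Connected := by
  have hs : (G.induce ({w} : Set W)).Connected := by
    have : Subsingleton (({w} : Set W)) := inferInstance
    exact SimpleGraph.Connected.of_subsingleton
  rw [coe_insert, Set.insert_eq]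
  exact connected_induce_union hs.preconnected hC.preconnected rfl hc h

open Classical in
/-- A connected set `C` in a connected graph `R` can be enlarged to contain a dominating set `D`,
at the price of three vertices for each vertex of `D` outside `C`: a vertex `q` at distance two
from `C`, reached through `p`, is dominated by some `d ∈ D`, which lies outside `C`. -/
lemma exists_connected_superset {W : Type*} {G : SimpleGraph W} {R D : Finset W} (hD : D ⊆ R)
    (hdom : ∀ x ∈ R, ∃ y ∈ D, G.Adj x y)
    (hconn : ∀ P ⊆ R, P.Nonempty → P ≠ R → ∃ p ∈ P, ∃ q ∈ R \ P, G.Adj p q) (n : ℕ) :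
    ∀ C ⊆ R, (G.induce (C : Set W)).Connected → #(D \ C) ≤ n →
      ∃ C' ⊆ R, D ⊆ C' ∧ (G.induce (C' : Set W)).Connected ∧ #C' ≤ #C + 3 * n := by
  induction n with
  | zero =>
    intro C hC hCc hn
    refine ⟨C, hC, ?_, hCc, by simp⟩
    rwa [Nat.le_zero, card_eq_zero, sdiff_eq_empty_iff_subset] at hn
  | succ n ih =>
    intro C hC hCc hn
    by_cases hDC : D ⊆ C
    · exact ⟨C, hC, hDC, hCc, by omega⟩
    have hstep : ∀ C₁ ⊆ R, C ⊆ C₁ → (G.induce (C₁ : Set W)).Connected → #C₁ ≤ #C + 3 →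
        (∃ d ∈ D, d ∉ C ∧ d ∈ C₁) →
        ∃ C' ⊆ R, D ⊆ C' ∧ (G.induce (C' : Set W)).Connected ∧ #C' ≤ #C + 3 * (n + 1) := by
      rintro C₁ hC₁ hCC₁ hc hcard ⟨d, hdD, hdC, hdC₁⟩
      have hlt : #(D \ C₁) < #(D \ C) := by
        refine card_lt_card ⟨sdiff_subset_sdiff le_rfl hCC₁, fun h => ?_⟩
        exact (mem_sdiff.1 (h (mem_sdiff.2 ⟨hdD, hdC⟩))).2 hdC₁
      obtain ⟨C', h1, h2, h3, h4⟩ := ih C₁ hC₁ hc (by omega)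
      exact ⟨C', h1, h2, h3, by omega⟩
    -- the closed neighbourhood of `C` in `R`
    set P : Finset W := {x ∈ R | x ∈ C ∨ ∃ c ∈ C, G.Adj x c} with hP
    have hCP : C ⊆ P := fun x hx => mem_filter.2 ⟨hC hx, Or.inl hx⟩
    obtain ⟨c₀⟩ := hCc.nonempty
    by_cases hPR : P = R
    · obtain ⟨d, hdD, hdC⟩ := not_subset.1 hDC
      have hdP : d ∈ P := hPR ▸ hD hdD
      obtain ⟨c, hc, hdc⟩ := (mem_filter.1 hdP).2.resolve_left hdC
      refine hstep (insert d C) (insert_subset (hD hdD) hC) (subset_insert _ _)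
        (connected_insert hCc hc hdc) ((card_insert_le _ _).trans (by omega))
        ⟨d, hdD, hdC, mem_insert_self _ _⟩
    · obtain ⟨p, hp, q, hq, hpq⟩ := hconn P (filter_subset _ _) ⟨c₀, hCP c₀.2⟩ hPR
      have hqR := (mem_sdiff.1 hq).1
      have hqP : ¬ (q ∈ C ∨ ∃ c ∈ C, G.Adj q c) :=
        fun h => (mem_sdiff.1 hq).2 (mem_filter.2 ⟨hqR, h⟩)
      have hpC : p ∉ C := fun h => hqP (Or.inr ⟨p, h, hpq.symm⟩)
      obtain ⟨c, hc, hpc⟩ := (mem_filter.1 hp).2.resolve_left hpC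
      obtain ⟨d, hdD, hqd⟩ := hdom q hqR
      have hdC : d ∉ C := fun h => hqP (Or.inr ⟨d, h, hqd⟩)
      have h1 := connected_insert hCc hc hpc
      have h2 := connected_insert h1 (mem_insert_self p C) hpq.symm
      have h3 := connected_insert h2 (mem_insert_self q _) hqd.symm
      refine hstep _ ?_ ?_ h3 ?_ ⟨d, hdD, hdC, mem_insert_self _ _⟩
      · exact insert_subset (hD hdD) (insert_subset hqR
          (insert_subset (mem_filter.1 hp).1 hC))
      · exact ((subset_insert _ _).trans (subset_insert _ _)).trans (subset_insert _ _)
      · have e1 := card_insert_le d (insert q (insert p C))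
        have e2 := card_insert_le q (insert p C)
        have e3 := card_insert_le p C
        omega

open Classical in
/-- Outside any small set `X` there is a connected set of at most `3m` vertices dominating `B`. -/
lemma exists_connected_dominating {W : Type*} {G : SimpleGraph W} {k m : ℕ} {B X : Finset W}
    (hB : B.Nonempty) (hBk : #B ≤ 4 * k)
    (hdeg : ∀ x ∈ B, 4 * k + #B ≤ 4 * #{w ∈ B | G.Adj x w}) (hX : 8 * #X ≤ #B)
    (hconn : ∀ P ⊆ B \ X, P.Nonempty → P ≠ B \ X → ∃ p ∈ P, ∃ q ∈ (B \ X) \ P, G.Adj p q)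
    (hm : 5 ^ m * (4 * k) < 8 ^ m) :
    ∃ C ⊆ B \ X, (G.induce (C : Set W)).Connected ∧ #C ≤ 3 * m ∧
      ∀ x ∈ B, ∃ y ∈ C, G.Adj x y := by
  obtain ⟨D, hD, hDm, hund⟩ := exists_almost_dominating hB hBk hdeg hX m
  -- fewer than one vertex is left undominated
  have hdom : ∀ x ∈ B, ∃ y ∈ D, G.Adj x y := by
    by_contra hcon
    push Not at hcon
    obtain ⟨x, hx, hxD⟩ := hcon
    have h1 : 1 ≤ #{x ∈ B | ∀ y ∈ D, ¬ G.Adj x y} := card_pos.2 ⟨x, mem_filter.2 ⟨hx, hxD⟩⟩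
    have h2 : 8 ^ m * 1 ≤ 5 ^ m * (4 * k) :=
      (Nat.mul_le_mul_left _ h1).trans (hund.trans (Nat.mul_le_mul_left _ hBk))
    omega
  obtain ⟨b, hb⟩ := hB
  obtain ⟨d, hd, -⟩ := hdom b hb
  have hs : (G.induce (({d} : Finset W) : Set W)).Connected := by
    rw [coe_singleton]
    have : Subsingleton (({d} : Set W)) := inferInstance
    exact SimpleGraph.Connected.of_subsingleton
  have hcard : #(D \ {d}) ≤ m - 1 := by
    rw [card_sdiff_of_subset (singleton_subset_iff.2 hd), card_singleton]
    omega
  obtain ⟨C, hC, hDC, hCc, hCm⟩ := exists_connected_superset hD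
    (fun x hx => hdom x (mem_sdiff.1 hx).1) hconn (m - 1) {d}
    (singleton_subset_iff.2 (hD hd)) hs hcard
  refine ⟨C, hC, hCc, ?_, fun x hx => ?_⟩
  · have h1 : 1 ≤ #D := card_pos.2 ⟨d, hd⟩
    rw [card_singleton] at hCm
    omega
  · obtain ⟨y, hy, hxy⟩ := hdom x hx
    exact ⟨y, hDC hy, hxy⟩

open Classical in
/-- Disjoint connected dominating sets are found one after another, deleting the previous ones. -/
lemma exists_family {W : Type*} {G : SimpleGraph W} {B : Finset W} {M : ℕ}
    (h : ∀ X : Finset W, 8 * #X ≤ #B → ∃ C ⊆ B \ X, (G.induce (C : Set W)).Connected ∧ #C ≤ M ∧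
      ∀ x ∈ B, ∃ y ∈ C, G.Adj x y) (s : ℕ) (hs : 8 * (s * M) ≤ #B) :
    ∃ D : ℕ → Finset W, (∀ i < s, D i ⊆ B ∧ (G.induce (D i : Set W)).Connected ∧ #(D i) ≤ M ∧
      ∀ x ∈ B, ∃ y ∈ D i, G.Adj x y) ∧ ∀ i < s, ∀ j < i, Disjoint (D i) (D j) := by
  induction s with
  | zero => exact ⟨fun _ => ∅, by simp, by simp⟩
  | succ s ih =>
    have hsM : (s + 1) * M = s * M + M := Nat.succ_mul s M
    obtain ⟨D, hD, hdis⟩ := ih (by omega)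
    have hX : #((range s).biUnion D) ≤ s * M := by
      refine (card_biUnion_le_card_mul _ _ M fun i hi => (hD i (mem_range.1 hi)).2.2.1).trans ?_
      rw [card_range]
    obtain ⟨C, hC, hCc⟩ := h ((range s).biUnion D) (by omega)
    have hold : ∀ i < s, Function.update D s C i = D i := fun i hi =>
      Function.update_of_ne hi.ne _ _
    have hnew : Function.update D s C s = C := Function.update_self _ _ _
    refine ⟨Function.update D s C, fun i hi => ?_, fun i hi j hj => ?_⟩
    · rcases Nat.lt_succ_iff_lt_or_eq.1 hi with hi | rfl
      · rw [hold i hi]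
        exact hD i hi
      · rw [hnew]
        exact ⟨hC.trans sdiff_subset, hCc⟩
    · rcases Nat.lt_succ_iff_lt_or_eq.1 hi with hi | rfl
      · rw [hold i hi, hold j (hj.trans hi)]
        exact hdis i hi j hj
      · rw [hnew, hold j hj, Finset.disjoint_left]
        intro x hx hx'
        exact (mem_sdiff.1 (hC hx)).2 (mem_biUnion.2 ⟨j, mem_range.2 hj, hx'⟩)

/-- Disjoint connected sets dominating `B` serve as the branch sets of the vertices in `S`, since
they send an edge to every nonempty subset of `B`. -/
lemma hasMinor_of_family {W U : Type*} {G : SimpleGraph W} {H : SimpleGraph U} {S : Finset U}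
    {B R : Set W} {E : U → Set W} (hEB : ∀ u ∈ S, E u ⊆ B)
    (hEc : ∀ u ∈ S, (G.induce (E u)).Connected)
    (hdom : ∀ u ∈ S, ∀ x ∈ B, ∃ y ∈ E u, G.Adj x y)
    (hdis : ∀ u ∈ S, ∀ v ∈ S, u ≠ v → Disjoint (E u) (E v))
    (hR : ∀ x ∈ R, x ∈ B ∧ ∀ u ∈ S, x ∉ E u)
    (h : HasMinor (G.induce R) (H.induce ((S : Set U)ᶜ))) :
    HasMinor G H := by
  classical
  obtain ⟨φ, hsub, hne, hc, hd, ha⟩ := h.exists_of_induce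
  have hns : ∀ {u}, u ∉ S → u ∈ ((S : Set U)ᶜ) := fun hu => by simpa using hu
  have hEne : ∀ u ∈ S, (E u).Nonempty := by
    intro u hu
    obtain ⟨x⟩ := (hEc u hu).nonempty
    exact ⟨x, x.2⟩
  refine ⟨fun u => if h : u ∈ S then E u else φ ⟨u, hns h⟩, fun u => ?_, fun u => ?_,
    fun u v huv => ?_, fun u v huv => ?_⟩
  · by_cases hu : u ∈ S
    · simpa only [dif_pos hu] using hEne u hu
    · simpa only [dif_neg hu] using hne _
  · by_cases hu : u ∈ S
    · beta_reduce
      rw [dif_pos hu]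
      exact hEc u hu
    · beta_reduce
      rw [dif_neg hu]
      exact hc _
  · have hcross : ∀ a ∈ S, ∀ b, Disjoint (E a) (φ b) := by
      intro a ha b
      rw [Set.disjoint_left]
      intro x hx hx'
      exact (hR x (hsub b hx')).2 a ha hx
    by_cases hu : u ∈ S <;> by_cases hv : v ∈ S <;> simp only [hu, hv, dite_true, dite_false]
    · exact hdis u hu v hv huv
    · exact hcross u hu _
    · exact (hcross v hv _).symm
    · exact hd fun h => huv (congrArg Subtype.val h)
  · by_cases hu : u ∈ S <;> by_cases hv : v ∈ S <;> simp only [hu, hv, dite_true, dite_false]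
    · obtain ⟨x, hx⟩ := hEne v hv
      obtain ⟨y, hy, hxy⟩ := hdom u hu x (hEB v hv hx)
      exact ⟨y, hy, x, hx, hxy.symm⟩
    · obtain ⟨x, hx⟩ := hne ⟨v, hns hv⟩
      obtain ⟨y, hy, hxy⟩ := hdom u hu x (hR x (hsub _ hx)).1
      exact ⟨y, hy, x, hx, hxy.symm⟩
    · obtain ⟨x, hx⟩ := hne ⟨u, hns hu⟩
      obtain ⟨y, hy, hxy⟩ := hdom v hv x (hR x (hsub _ hx)).1
      exact ⟨x, hx, y, hy, hxy⟩
    · exact ha (w := ⟨u, hns hu⟩) (w' := ⟨v, hns hv⟩) huv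

/-! ### The number of steps and the embedding of `H` -/

/-- The number `m` of greedy steps. The choice `m = ⌊(8/3) log (4k)⌋ + 1` gives
`(8/5)^m ≥ exp (3m/8) > 4k`, and the `s` dominating sets of size `3m` use at most `k / 8`
vertices. -/
lemma exists_steps {s t k : ℕ} (ht : 3 ≤ t) (hst : (s : ℝ) ≤ t / (100 * Real.log t))
    (hk : t ≤ k + 1) : ∃ m : ℕ, 5 ^ m * (4 * k) < 8 ^ m ∧ 8 * (s * (3 * m)) ≤ k := by
  have hk0 : (0 : ℝ) < 4 * k := by
    have : 0 < 4 * k := by omega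
    exact_mod_cast this
  have htR : (3 : ℝ) ≤ t := by exact_mod_cast ht
  have hL1 : 1 ≤ Real.log t := by
    rw [Real.le_log_iff_exp_le (by linarith)]
    have := Real.exp_one_lt_d9
    linarith
  have hlogk : 0 ≤ Real.log (4 * k) := by
    apply Real.log_nonneg
    have : 1 ≤ 4 * k := by omega
    exact_mod_cast this
  set m : ℕ := ⌊8 / 3 * Real.log (4 * k)⌋₊ + 1 with hm
  have hm1 : 8 / 3 * Real.log (4 * k) < m := by
    rw [hm]
    push_cast
    exact Nat.lt_floor_add_one _
  have hm2 : (m : ℝ) ≤ 8 / 3 * Real.log (4 * k) + 1 := by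
    rw [hm]
    push_cast
    have := Nat.floor_le (by positivity : 0 ≤ 8 / 3 * Real.log (4 * k))
    linarith
  refine ⟨m, ?_, ?_⟩
  · have h1 : Real.exp (3 / 8) ≤ 8 / 5 := by
      have h2 := Real.add_one_le_exp (-(3 / 8 : ℝ))
      rw [Real.exp_neg] at h2
      have h3 := Real.exp_pos (3 / 8)
      have h4 : Real.exp (3 / 8) * (Real.exp (3 / 8))⁻¹ = 1 := mul_inv_cancel₀ h3.ne'
      nlinarith
    have h2 : (4 * k : ℝ) < (8 / 5) ^ m := by
      calc (4 * k : ℝ) = Real.exp (Real.log (4 * k)) := (Real.exp_log hk0).symm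
        _ < Real.exp (m * (3 / 8)) := Real.exp_lt_exp.2 (by linarith)
        _ = Real.exp (3 / 8) ^ m := Real.exp_nat_mul _ _
        _ ≤ _ := pow_le_pow_left₀ (Real.exp_pos _).le h1 m
    rw [div_pow, lt_div_iff₀ (by positivity)] at h2
    have h3 : (5 : ℝ) ^ m * (4 * k) < 8 ^ m := by linarith
    exact_mod_cast h3
  · rcases Nat.eq_zero_or_pos s with rfl | hs
    · simp
    have hsR : (1 : ℝ) ≤ s := by exact_mod_cast hs
    have hsL : (s : ℝ) * (100 * Real.log t) ≤ t := by
      rwa [le_div_iff₀ (by positivity)] at hst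
    have ht100 : (100 : ℝ) ≤ t := by nlinarith
    have hkt : (t : ℝ) ≤ k + 1 := by exact_mod_cast hk
    have hlog4 : Real.log 4 ≤ 1.388 := by
      have : (4 : ℝ) = 2 ^ 2 := by norm_num
      rw [this, Real.log_pow]
      have := Real.log_two_lt_d9
      push_cast
      linarith
    have hL4 : 4.15 ≤ Real.log t := by
      have h1 : Real.log 64 ≤ Real.log t := Real.log_le_log (by norm_num) (by linarith)
      have h2 : (64 : ℝ) = 2 ^ 6 := by norm_num
      rw [h2, Real.log_pow] at h1
      have := Real.log_two_gt_d9
      push_cast at h1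
      linarith
    have hkpos : (0 : ℝ) < k := by linarith
    have htpos : (0 : ℝ) < t := by linarith
    -- `log (4k)` is compared with `log t` through `log (k/t) ≤ k/t - 1`
    have hlog : t * Real.log (4 * k) ≤ t * Real.log t + 0.388 * t + k := by
      have h1 : Real.log (4 * k) = Real.log 4 + Real.log t + Real.log (k / t) := by
        rw [Real.log_mul (by norm_num) hkpos.ne', Real.log_div hkpos.ne' htpos.ne']
        ring
      have h2 := Real.log_le_sub_one_of_pos (div_pos hkpos htpos)
      have h3 : t * Real.log (4 * k) ≤ t * (1.388 + Real.log t + (k / t - 1)) := by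
        rw [h1]
        exact mul_le_mul_of_nonneg_left (by linarith) htpos.le
      have h4 : (t : ℝ) * (k / t) = k := mul_div_cancel₀ _ htpos.ne'
      linarith
    have htk : (t : ℝ) ≤ 1.02 * k := by linarith
    have hmain : t * (64 * Real.log (4 * k) + 24) ≤ 100 * Real.log t * k := by
      have h1 : (t : ℝ) * (64 * Real.log t + 48.832) ≤ 1.02 * k * (64 * Real.log t + 48.832) :=
        mul_le_mul_of_nonneg_right htk (by linarith)
      have h2 : 4.15 * (k : ℝ) ≤ Real.log t * k := mul_le_mul_of_nonneg_right hL4 hkpos.le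
      linarith
    have hfin : (s : ℝ) * (64 * Real.log (4 * k) + 24) * (100 * Real.log t) ≤
        k * (100 * Real.log t) := by
      calc (s : ℝ) * (64 * Real.log (4 * k) + 24) * (100 * Real.log t)
          = s * (100 * Real.log t) * (64 * Real.log (4 * k) + 24) := by ring
        _ ≤ t * (64 * Real.log (4 * k) + 24) := mul_le_mul_of_nonneg_right hsL (by linarith)
        _ ≤ 100 * Real.log t * k := hmain
        _ = _ := by ring
    have hfin' := le_of_mul_le_mul_right hfin (by linarith)
    have h5 : (s : ℝ) * (24 * m) ≤ s * (64 * Real.log (4 * k) + 24) :=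
      mul_le_mul_of_nonneg_left (by linarith) (by linarith)
    have h6 : (8 : ℝ) * (s * (3 * m)) ≤ k := by linarith
    exact_mod_cast h6

/-- The core of the argument: average degree `4k` forces an `H`-minor as soon as average degree `k`
forces an `(H - S)`-minor and `s` disjoint dominating sets fit into the budget of `k / 8`
vertices. -/
lemma hasMinor_of_avgDeg {k m s : ℕ} (hk : 1 ≤ k) (hm : 5 ^ m * (4 * k) < 8 ^ m)
    (hs : 8 * (s * (3 * m)) ≤ k) {U : Type} {H : SimpleGraph U} {S : Finset U} (hS : #S = s)
    (hf : ∀ (V : Type) [Fintype V], ∀ G : SimpleGraph V, (k : ℝ) ≤ avgDeg G →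
      HasMinor G (H.induce ((S : Set U)ᶜ)))
    {V : Type} [Fintype V] {G : SimpleGraph V} (hG : (4 * k : ℝ) ≤ avgDeg G) : HasMinor G H := by
  classical
  obtain ⟨hpos, he⟩ := le_card_edgeSet_of_avgDeg (β := 2 * k) (G := G) (by omega)
    (by push_cast; linarith)
  obtain ⟨W, _, K, v, hK, hdegv, ⟨x, hx⟩, hcommon⟩ :=
    exists_dense_neighborhood (by omega) _ V G rfl hpos he
  refine hK.trans ?_
  obtain ⟨B, hBA, hB, hBdeg, hBconn⟩ := exists_robust (G := K) (k := k)
    (A := {x | K.Adj v x}) ⟨x, by simpa using hx⟩ (by omega) (by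
      intro y hy
      rw [filter_filter]
      exact hcommon y (by simpa using hy))
  obtain ⟨b, hb⟩ := hB
  have hBk : #B ≤ 4 * k := (card_le_card hBA).trans (by omega)
  have hkB : k ≤ #B := by
    have h1 := hBdeg b hb
    have h2 : #{w ∈ B | K.Adj b w} ≤ #B := card_filter_le _ _
    omega
  obtain ⟨D, hD, hDdis⟩ := exists_family (G := K) (B := B) (M := 3 * m)
    (fun X hX => exists_connected_dominating ⟨b, hb⟩ hBk hBdeg hX (hBconn X hX) hm) s (by omega)
  have hX : #((range s).biUnion D) ≤ s * (3 * m) := by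
    refine (card_biUnion_le_card_mul _ _ (3 * m)
      fun i hi => (hD i (mem_range.1 hi)).2.2.1).trans ?_
    rw [card_range]
  have hRne : (B \ (range s).biUnion D).Nonempty := by
    rw [sdiff_nonempty]
    intro h
    have h1 := card_le_card h
    omega
  have hRdeg : ∀ x ∈ B \ (range s).biUnion D,
      k ≤ #{w ∈ B \ (range s).biUnion D | K.Adj x w} := by
    intro x hx
    have h1 := hBdeg x (mem_sdiff.1 hx).1
    have h2 : #{w ∈ B | K.Adj x w} ≤
        #{w ∈ B \ (range s).biUnion D | K.Adj x w} + #((range s).biUnion D) := by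
      refine (card_le_card fun w hw => ?_).trans (card_union_le _ _)
      rw [mem_filter] at hw
      rw [mem_union, mem_filter, mem_sdiff]
      tauto
    omega
  have hminor := hf _ _ (le_avgDeg_induce K hRne hRdeg)
  -- an enumeration of `S` by `0, …, s - 1`
  obtain ⟨idx, hidx, hinj⟩ : ∃ idx : U → ℕ, (∀ u ∈ S, idx u < s) ∧
      ∀ u ∈ S, ∀ v ∈ S, idx u = idx v → u = v := by
    refine ⟨fun u => if h : u ∈ S then S.equivFin ⟨u, h⟩ else 0, fun u hu => ?_,
      fun u hu v hv h => ?_⟩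
    · simp only [dif_pos hu, ← hS]
      exact (S.equivFin ⟨u, hu⟩).2
    · simp only [dif_pos hu, dif_pos hv] at h
      exact congrArg Subtype.val (S.equivFin.injective (Fin.ext h))
  refine hasMinor_of_family (B := (B : Set W)) (E := fun u => (D (idx u) : Set W))
    (fun u hu => coe_subset.2 (hD _ (hidx u hu)).1) (fun u hu => (hD _ (hidx u hu)).2.1)
    (fun u hu x hx => (hD _ (hidx u hu)).2.2.2 x hx) ?_ ?_ hminor
  · intro u hu v hv huv
    rw [disjoint_coe]
    rcases lt_trichotomy (idx u) (idx v) with h | h | h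
    · exact (hDdis _ (hidx v hv) _ h).symm
    · exact absurd (hinj u hu v hv h) huv
    · exact hDdis _ (hidx u hu) _ h
  · intro x hx
    rw [mem_coe, mem_sdiff] at hx
    refine ⟨hx.1, fun u hu hxu => hx.2 (mem_biUnion.2 ⟨idx u, mem_range.2 (hidx u hu), hxu⟩)⟩

/-- For every real `ε ∈ (0, 1]` and all integers `s ≥ 0` and `t ≥ 3` with
`s ≤ (ε/100)·t/ln t`, for every graph `H` and every set `S` of `s` vertices of `H` with
`|V(H)| = s + t`, every graph `G` with `d(G) ≥ 4·⌈(1 + ε)·f(H − S)⌉` contains `H` as a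
minor; in particular `f(H) ≤ 4·⌈(1 + ε)·f(H − S)⌉`. -/
theorem statement1 (ε : ℝ) (hε0 : 0 < ε) (hε1 : ε ≤ 1) (s t : ℕ) (ht : 3 ≤ t)
    (hst : (s : ℝ) ≤ ε / 100 * t / Real.log t)
    (U : Type) [Fintype U] (H : SimpleGraph U) (S : Finset U)
    (hcard : Fintype.card U = s + t) (hS : S.card = s) :
    (∀ (V : Type) [Fintype V], ∀ G : SimpleGraph V,
        4 * (⌈(1 + ε) * minorF (H.induce ((S : Set U)ᶜ))⌉ : ℝ) ≤ avgDeg G →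
        HasMinor G H) ∧
    minorF H ≤ 4 * (⌈(1 + ε) * minorF (H.induce ((S : Set U)ᶜ))⌉ : ℝ) := by
  classical
  have hW : Fintype.card ((S : Set U)ᶜ : Set U) = t := by
    rw [Fintype.card_compl_set, hcard]
    simp [hS]
  set F : Set ℝ := {D : ℝ | ∀ (V : Type) [Fintype V], ∀ G : SimpleGraph V,
    D ≤ avgDeg G → HasMinor G (H.induce ((S : Set U)ᶜ))} with hF
  have hFne : F.Nonempty := minorF_set_nonempty _
  have htR : (3 : ℝ) ≤ t := by exact_mod_cast ht
  have hflow : (t : ℝ) - 2 ≤ minorF (H.induce ((S : Set U)ᶜ)) :=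
    le_csInf hFne fun D hD => (lt_of_forall_hasMinor (by omega) hW hD).le
  set f : ℝ := minorF (H.induce ((S : Set U)ᶜ)) with hfdef
  have hffac : f < (1 + ε) * f := by nlinarith
  have hceil : (1 + ε) * f ≤ (⌈(1 + ε) * f⌉ : ℝ) := Int.le_ceil _
  obtain ⟨k, hk⟩ : ∃ k : ℕ, ⌈(1 + ε) * f⌉ = k :=
    Int.eq_ofNat_of_zero_le (Int.ceil_nonneg (by linarith))
  rw [hk, Int.cast_natCast] at hceil ⊢
  have hk1 : t ≤ k + 1 := by
    have h1 : (t : ℝ) < k + 2 := by linarith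
    have h2 : t < k + 2 := by exact_mod_cast h1
    omega
  -- `k` exceeds the infimum, hence is admissible
  have hfk : ∀ (V : Type) [Fintype V], ∀ G : SimpleGraph V, (k : ℝ) ≤ avgDeg G →
      HasMinor G (H.induce ((S : Set U)ᶜ)) := by
    obtain ⟨D, hD, hDk⟩ := exists_lt_of_csInf_lt hFne (show sInf F < k from hffac.trans_le hceil)
    exact fun V _ G hG => hD V G (hDk.le.trans hG)
  have hlog : 0 < Real.log t := Real.log_pos (by linarith)
  have hst' : (s : ℝ) ≤ t / (100 * Real.log t) := by
    refine hst.trans ?_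
    rw [← div_div, div_mul_eq_mul_div]
    gcongr
    nlinarith
  obtain ⟨m, hm, hsm⟩ := exists_steps ht hst' hk1
  have hmain : ∀ (V : Type) [Fintype V], ∀ G : SimpleGraph V,
      4 * (k : ℝ) ≤ avgDeg G → HasMinor G H :=
    fun V _ G hG => hasMinor_of_avgDeg (by omega) hm hsm hS hfk hG
  exact ⟨hmain, csInf_le ⟨(t : ℝ) - 2, fun D hD => by
    have := lt_of_forall_hasMinor (by omega) hcard hD
    push_cast at this
    have hs0 : (0 : ℝ) ≤ s := Nat.cast_nonneg s
    linarith⟩ hmain⟩
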